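/- Let A be a simply-laced Cartan matrix of finite type, w a Weyl group element and ι = (i_1,…,i_k) a reduced word for w. Suppose one finite sequence of 2-moves and 3-moves transforms ι into a reduced word 𝐣 = (j_1,…,j_k) and another such sequence transforms ι into a reduced word 𝐥 = (l_1,…,l_k), with j_1 = l_1. Then for every x ∈ ℤ^k, the images y = (y_1,…,y_k) and z = (z_1,…,z_k) of x under the corresponding compositions of associated maps satisfy y_1 = z_1. -/

import Mathlib

/-!
STATEMENT 16: Let A be a simply-laced Cartan matrix of finite type, w a Weyl group
element and ι a reduced word for w. Suppose one finite sequence of 2-moves and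
3-moves transforms ι into a reduced word 𝐣 and another transforms ι into 𝐥, with
j_1 = l_1. Then for every x ∈ ℤ^k the images y, z of x under the corresponding
compositions of associated maps satisfy y_1 = z_1.
-/
/-- The simple reflection `s_i` of the Cartan matrix `a`, acting on the root
lattice (tensored with `ℚ`), `s_i(α_j) = α_j - a_{ij} α_i`. -/
def sRefl {n : ℕ} (a : Fin n → Fin n → ℤ) (i : Fin n) : (Fin n → ℚ) → (Fin n → ℚ) :=
  fun v => v - (∑ j, (a i j : ℚ) * v j) • (Pi.single i 1 : Fin n → ℚ)

/-- The product `s_{i_1} s_{i_2} ⋯ s_{i_k}` of simple reflections along a word. -/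
def wProd {n : ℕ} (a : Fin n → Fin n → ℤ) (l : List (Fin n)) : (Fin n → ℚ) → (Fin n → ℚ) :=
  (l.map (sRefl a)).foldr (· ∘ ·) id

/-- An `n×n` Cartan matrix of a finite-dimensional complex simple Lie algebra:
an indecomposable generalized Cartan matrix whose Weyl group is finite. -/
structure SimpleCartanMatrix (n : ℕ) where
  a : Fin n → Fin n → ℤ
  npos : 0 < n
  diag : ∀ i, a i i = 2
  offdiag_nonpos : ∀ i j, i ≠ j → a i j ≤ 0
  zero_symm : ∀ i j, a i j = 0 → a j i = 0
  indecomposable : ∀ S : Set (Fin n), (∀ i ∈ S, ∀ j, j ∉ S → a i j = 0) → S = ∅ ∨ S = Set.univ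
  finiteWeyl : Set.Finite {w : (Fin n → ℚ) → (Fin n → ℚ) | ∃ l : List (Fin n), w = wProd a l}

/-- A word is reduced if it has minimal length among all words representing the
same Weyl group element. -/
def IsReducedList {n : ℕ} (a : Fin n → Fin n → ℤ) (l : List (Fin n)) : Prop :=
  ∀ l' : List (Fin n), wProd a l' = wProd a l → l.length ≤ l'.length

/-- A 2-move or a 3-move, at a given position. -/
inductive BMove where
  | two (p : ℕ)
  | three (p : ℕ)

/-- The action of a move on words: a 2-move at `p` swaps the letters at
positions `p, p+1`; a 3-move at `p` turns the letters `(i,j,i)` at positions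
`p, p+1, p+2` into `(j,i,j)`. -/
def moveWord {n k : ℕ} (w : Fin k → Fin n) : BMove → (Fin k → Fin n)
  | .two p => fun q =>
      if h1 : (q : ℕ) = p ∧ p + 1 < k then w ⟨p + 1, h1.2⟩
      else if h2 : (q : ℕ) = p + 1 ∧ p < k then w ⟨p, h2.2⟩
      else w q
  | .three p => fun q =>
      if h1 : (q : ℕ) = p ∧ p + 1 < k then w ⟨p + 1, h1.2⟩
      else if h2 : (q : ℕ) = p + 1 ∧ p < k then w ⟨p, h2.2⟩
      else if h3 : (q : ℕ) = p + 2 ∧ p + 1 < k then w ⟨p + 1, h3.2⟩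
      else w q

/-- The piecewise-linear map on `ℤ^k` associated with a move: a 2-move at `p`
swaps the coordinates at positions `p, p+1`; a 3-move at `p` sends the
coordinates `(x,y,z)` at positions `p, p+1, p+2` to
`(max(z, y−x), x+z, min(x, y−z))`. -/
def moveZ {k : ℕ} (x : Fin k → ℤ) : BMove → (Fin k → ℤ)
  | .two p => fun q =>
      if h1 : (q : ℕ) = p ∧ p + 1 < k then x ⟨p + 1, h1.2⟩
      else if h2 : (q : ℕ) = p + 1 ∧ p < k then x ⟨p, h2.2⟩
      else x q
  | .three p =>
      if h : p + 2 < k then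
        fun q =>
          if (q : ℕ) = p then
            max (x ⟨p + 2, h⟩) (x ⟨p + 1, by omega⟩ - x ⟨p, by omega⟩)
          else if (q : ℕ) = p + 1 then x ⟨p, by omega⟩ + x ⟨p + 2, h⟩
          else if (q : ℕ) = p + 2 then
            min (x ⟨p, by omega⟩) (x ⟨p + 1, by omega⟩ - x ⟨p + 2, h⟩)
          else x q
      else x

/-- Applicability of a move to a word: a 2-move at `p` requires letters `i,j` at
positions `p, p+1` with `a_{ij} = a_{ji} = 0`; a 3-move at `p` requires letters
`(i,j,i)` at positions `p, p+1, p+2` with `a_{ij} = a_{ji} = -1`. -/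
def ValidMove {n k : ℕ} (a : Fin n → Fin n → ℤ) (w : Fin k → Fin n) : BMove → Prop
  | .two p => ∃ h : p + 1 < k,
      a (w ⟨p, by omega⟩) (w ⟨p + 1, h⟩) = 0 ∧ a (w ⟨p + 1, h⟩) (w ⟨p, by omega⟩) = 0
  | .three p => ∃ h : p + 2 < k,
      w ⟨p, by omega⟩ = w ⟨p + 2, h⟩ ∧
      a (w ⟨p, by omega⟩) (w ⟨p + 1, by omega⟩) = -1 ∧
      a (w ⟨p + 1, by omega⟩) (w ⟨p, by omega⟩) = -1

/-- A sequence of moves, each applicable to the word obtained so far. -/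
inductive ValidSeq {n k : ℕ} (a : Fin n → Fin n → ℤ) :
    (Fin k → Fin n) → List BMove → Prop
  | nil (w : Fin k → Fin n) : ValidSeq a w []
  | cons (w : Fin k → Fin n) (m : BMove) (ms : List BMove) :
      ValidMove a w m → ValidSeq a (moveWord w m) ms → ValidSeq a w (m :: ms)

/-- The word obtained after applying a sequence of moves. -/
def wordAfter {n k : ℕ} (w : Fin k → Fin n) (ms : List BMove) : Fin k → Fin n :=
  ms.foldl moveWord w

/-- The composition of the piecewise-linear maps associated with a sequence of
moves, applied to `x ∈ ℤ^k`. -/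
def zAfter {k : ℕ} (x : Fin k → ℤ) (ms : List BMove) : Fin k → ℤ :=
  ms.foldl moveZ x

/-!
Take the moves on words in decorated letters `(i, x)`, together with their piecewise-linear maps,
as the defining relations of a monoid. The theorem is then a consequence of left cancellation:
`(i, x) q = (i, y) r` implies `x = y` and `q = r` if no representing word contains the same letter
twice in a row.

Cancellation is proved by induction on the length. A move that does not touch the first letter does
not change the factorization `(i, x) q` of a word, so the factorizations belonging to two equal
words are joined by a chain of jumps, each of them a move at the first letter. Two consecutive
jumps amount to at most one: if their first letters `i`, `j`, `k` are distinct, all three can be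
split off on the left, so they generate a finite parabolic subgroup of type `A₁ × A₁ × A₁`,
`A₁ × A₂` or `A₃`, where the claim is a computation. For `A₃` it is the tetrahedron equation of the
map of the 3-move. Therefore a chain of jumps that returns to its first letter is trivial.
-/

/-- A simply-laced generalized Cartan matrix; it is not required to be of finite type. -/
structure IsSimplyLacedCartan {I : Type*} (a : I → I → ℤ) : Prop where
  diag : ∀ i, a i i = 2
  symm : ∀ i j, a j i = a i j
  isSimplyLaced : Matrix.IsSimplyLaced a

namespace IsSimplyLacedCartan

variable {I : Type*} {a : I → I → ℤ}

theorem eq_or_eq_zero_or_eq_neg_one (H : IsSimplyLacedCartan a) (i j : I) :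
    i = j ∨ a i j = 0 ∨ a i j = -1 :=
  or_iff_not_imp_left.2 fun h => H.isSimplyLaced h

theorem ne_of_eq_zero (H : IsSimplyLacedCartan a) {i j : I} (h : a i j = 0) : i ≠ j := by
  rintro rfl
  have := H.diag i
  omega

theorem ne_of_eq_neg_one (H : IsSimplyLacedCartan a) {i j : I} (h : a i j = -1) : i ≠ j := by
  rintro rfl
  have := H.diag i
  omega

end IsSimplyLacedCartan

/-- The piecewise-linear map of a 3-move sends `(x, y, z)` to `(x', y', z')`. -/
structure IsBraidMove (x y z x' y' z' : ℤ) : Prop where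
  fst : x' = max z (y - x)
  snd : y' = x + z
  trd : z' = min x (y - z)

namespace IsBraidMove

variable {x y z x' y' z' : ℤ}

theorem symm (h : IsBraidMove x y z x' y' z') : IsBraidMove x' y' z' x y z := by
  obtain ⟨rfl, rfl, rfl⟩ := h
  constructor <;> omega

theorem exists_image (x y z : ℤ) : ∃ x' y' z', IsBraidMove x y z x' y' z' :=
  ⟨_, _, _, rfl, rfl, rfl⟩

theorem fst_add_trd (h : IsBraidMove x y z x' y' z') : x' + z' = y := by
  obtain ⟨rfl, rfl, rfl⟩ := h
  omega

theorem unique {x'' y'' z'' : ℤ} (h : IsBraidMove x y z x' y' z')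
    (h' : IsBraidMove x y z x'' y'' z'') : x' = x'' ∧ y' = y'' ∧ z' = z'' :=
  ⟨h.fst.trans h'.fst.symm, h.snd.trans h'.snd.symm, h.trd.trans h'.trd.symm⟩

end IsBraidMove

/-- Defining relations on words in decorated letters `(i, x)`: a 2-move or 3-move together with
its piecewise-linear map on the decorations. -/
inductive MoveRel {I : Type*} (a : I → I → ℤ) : FreeMonoid (I × ℤ) → FreeMonoid (I × ℤ) → Prop
  | two {i j : I} (hij : a i j = 0) (x y : ℤ) :
      MoveRel a (.of (i, x) * .of (j, y)) (.of (j, y) * .of (i, x))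
  | three {i j : I} (hij : a i j = -1) {x y z x' y' z' : ℤ} (h : IsBraidMove x y z x' y' z') :
      MoveRel a (.of (i, x) * (.of (j, y) * .of (i, z)))
        (.of (j, x') * (.of (i, y') * .of (j, z')))

/-- The monoid of decorated words up to moves: a word `ι` decorated by a tuple `x` and the word
obtained from it by a sequence of moves, decorated by the image of `x`, are equal here. -/
abbrev MoveMonoid {I : Type*} (a : I → I → ℤ) := PresentedMonoid (MoveRel a)

namespace MoveMonoid

variable {I : Type*} {a : I → I → ℤ}

/-- The class of a decorated word. -/
def mk (a : I → I → ℤ) : FreeMonoid (I × ℤ) →* MoveMonoid a := PresentedMonoid.mk _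

theorem mk_surjective : Function.Surjective (mk a) := PresentedMonoid.surjective_mk

/-- The letter `i` decorated by the integer `x`. -/
def letter (i : I) (x : ℤ) : MoveMonoid a := mk a (.of (i, x))

theorem letter_comm {i j : I} (hij : a i j = 0) (x y : ℤ) :
    (letter i x * letter j y : MoveMonoid a) = letter j y * letter i x :=
  PresentedMonoid.mk_eq_mk_of_rel (.two hij x y)

theorem letter_braid {i j : I} (hij : a i j = -1) {x y z x' y' z' : ℤ}
    (h : IsBraidMove x y z x' y' z') :
    (letter i x * (letter j y * letter i z) : MoveMonoid a) =
      letter j x' * (letter i y' * letter j z') :=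
  PresentedMonoid.mk_eq_mk_of_rel (.three hij h)

theorem letter_mul_comm {i j : I} (hij : a i j = 0) (x y : ℤ) (q : MoveMonoid a) :
    letter i x * (letter j y * q) = letter j y * (letter i x * q) := by
  rw [← mul_assoc, letter_comm hij, mul_assoc]

theorem letter_mul_braid {i j : I} (hij : a i j = -1) {x y z x' y' z' : ℤ}
    (h : IsBraidMove x y z x' y' z') (q : MoveMonoid a) :
    letter i x * (letter j y * (letter i z * q)) =
      letter j x' * (letter i y' * (letter j z' * q)) := by
  simpa only [mul_assoc] using congrArg (· * q) (letter_braid hij h)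

theorem eq_one_or_eq_letter_mul (m : MoveMonoid a) : m = 1 ∨ ∃ i x q, m = letter i x * q := by
  obtain ⟨u, rfl⟩ := mk_surjective m
  cases u with
  | one => exact .inl rfl
  | of_mul p u => exact .inr ⟨p.1, p.2, mk a u, rfl⟩

/-- The length homomorphism, written multiplicatively. -/
def lengthHom : MoveMonoid a →* Multiplicative ℕ :=
  PresentedMonoid.lift (fun _ => .ofAdd 1) fun _ _ h => by
    cases h <;> simp only [map_mul, FreeMonoid.lift_eval_of]

/-- The common length of all words representing an element. -/
def length (m : MoveMonoid a) : ℕ := (lengthHom m).toAdd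

@[simp]
theorem length_one : (1 : MoveMonoid a).length = 0 := by
  rw [length, map_one, toAdd_one]

@[simp]
theorem length_mul (m m' : MoveMonoid a) : (m * m').length = m.length + m'.length := by
  rw [length, map_mul, toAdd_mul, length, length]

@[simp]
theorem length_letter (i : I) (x : ℤ) : (letter i x : MoveMonoid a).length = 1 := rfl

/-- No representing word contains the same letter twice in a row. By Tits this is equivalent to
being represented by a reduced word. -/
def IsReduced (m : MoveMonoid a) : Prop :=
  ∀ (i : I) (x y : ℤ) (p q : MoveMonoid a), m ≠ p * (letter i x * letter i y) * q

theorem IsReduced.of_mul_left {p m : MoveMonoid a} (h : (p * m).IsReduced) : m.IsReduced :=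
  fun i x y p' q' hm => h i x y (p * p') q' <| by simp only [hm, mul_assoc]

theorem IsReduced.of_mul_right {m p : MoveMonoid a} (h : (m * p).IsReduced) : m.IsReduced :=
  fun i x y p' q' hm => h i x y p' (q' * p) <| by simp only [hm, mul_assoc]

theorem not_isReduced_letter_mul_letter_mul (i : I) (x y : ℤ) (q : MoveMonoid a) :
    ¬ (letter i x * (letter i y * q)).IsReduced :=
  fun h => h i x y 1 q <| by simp only [one_mul, mul_assoc]

end MoveMonoid

open MoveMonoid

section Roots

variable {I : Type*} [DecidableEq I]

/-- The simple root `α_i` in the root space with basis `I`. -/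
def simpleRoot (i : I) : I → ℚ := Pi.single i 1

theorem simpleRoot_nonneg (i : I) : 0 ≤ simpleRoot i :=
  Pi.single_nonneg.2 zero_le_one

variable [Fintype I] (a : I → I → ℤ)

/-- The simple coroot `α_i^∨`, normalised by `⟨α_i^∨, α_j⟩ = a_{ij}`. -/
def simpleCoroot (i : I) : Module.Dual ℚ (I → ℚ) :=
  Fintype.linearCombination ℚ fun j => (a i j : ℚ)

theorem simpleCoroot_simpleRoot (i j : I) : simpleCoroot a i (simpleRoot j) = a i j :=
  (Fintype.linearCombination_apply_single ..).trans (one_smul ..)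

variable {a}

namespace IsSimplyLacedCartan

variable (H : IsSimplyLacedCartan a)

/-- The simple reflection `s_i`, as a linear automorphism of the root space. -/
def simpleReflection (i : I) : (I → ℚ) ≃ₗ[ℚ] (I → ℚ) :=
  Module.reflection (x := simpleRoot i) (f := simpleCoroot a i) <| by
    rw [simpleCoroot_simpleRoot, H.diag, Int.cast_ofNat]

theorem simpleReflection_apply (i : I) (v : I → ℚ) :
    H.simpleReflection i v = v - simpleCoroot a i v • simpleRoot i :=
  Module.reflection_apply ..

theorem simpleReflection_simpleRoot (i j : I) :
    H.simpleReflection i (simpleRoot j) = simpleRoot j - (a i j : ℚ) • simpleRoot i := by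
  rw [simpleReflection_apply, simpleCoroot_simpleRoot]

theorem simpleReflection_mul_self (i : I) : H.simpleReflection i * H.simpleReflection i = 1 :=
  LinearEquiv.ext (Module.involutive_reflection _)

theorem simpleReflection_comm {i j : I} (hij : a i j = 0) :
    H.simpleReflection i * H.simpleReflection j = H.simpleReflection j * H.simpleReflection i := by
  have hji : a j i = 0 := H.symm i j ▸ hij
  ext1 v
  simp only [LinearEquiv.mul_apply, simpleReflection_apply, map_sub, map_smul,
    simpleCoroot_simpleRoot, hij, hji, Int.cast_zero]
  module

theorem simpleReflection_braid {i j : I} (hij : a i j = -1) :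
    H.simpleReflection i * (H.simpleReflection j * H.simpleReflection i) =
      H.simpleReflection j * (H.simpleReflection i * H.simpleReflection j) := by
  have hji : a j i = -1 := H.symm i j ▸ hij
  ext1 v
  simp only [LinearEquiv.mul_apply, simpleReflection_apply, map_sub, map_smul,
    simpleCoroot_simpleRoot, hij, hji, H.diag, Int.cast_neg, Int.cast_one, Int.cast_ofNat]
  module

/-- The Weyl group element `s_{i_1} ⋯ s_{i_k}` underlying a decorated word. -/
def weyl : MoveMonoid a →* (I → ℚ) ≃ₗ[ℚ] (I → ℚ) :=
  PresentedMonoid.lift (fun p => H.simpleReflection p.1) fun _ _ h => by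
    cases h with
    | two hij => simpa only [map_mul, FreeMonoid.lift_eval_of] using H.simpleReflection_comm hij
    | three hij => simpa only [map_mul, FreeMonoid.lift_eval_of] using H.simpleReflection_braid hij

theorem weyl_letter (i : I) (x : ℤ) : H.weyl (letter i x) = H.simpleReflection i := rfl

theorem weyl_letter_mul_letter (i : I) (x y : ℤ) : H.weyl (letter i x * letter i y) = 1 :=
  H.simpleReflection_mul_self i

/-- The root `w⁻¹ α_i`, where `w` is the Weyl group element underlying `m`. When it is negative,
`m` is represented by a word that starts with the letter `i`. -/
def root (m : MoveMonoid a) (i : I) : I → ℚ := (H.weyl m)⁻¹ (simpleRoot i)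

theorem root_one (i : I) : H.root 1 i = simpleRoot i := by
  rw [root, map_one, inv_one, LinearEquiv.coe_one, id_eq]

theorem root_letter_mul (i j : I) (x : ℤ) (m : MoveMonoid a) :
    H.root (letter i x * m) j = H.root m j - (a i j : ℚ) • H.root m i := by
  have hinv : (H.simpleReflection i)⁻¹ = H.simpleReflection i :=
    inv_eq_of_mul_eq_one_left (H.simpleReflection_mul_self i)
  rw [root, map_mul, weyl_letter, mul_inv_rev, hinv, LinearEquiv.mul_apply,
    simpleReflection_simpleRoot, map_sub, map_smul, root, root]

theorem root_letter_mul_self (i : I) (x : ℤ) (m : MoveMonoid a) :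
    H.root (letter i x * m) i = -H.root m i := by
  rw [root_letter_mul, H.diag]
  module

theorem root_letter_mul_of_eq_zero {i j : I} (hij : a i j = 0) (x : ℤ) (m : MoveMonoid a) :
    H.root (letter i x * m) j = H.root m j := by
  rw [root_letter_mul, hij, Int.cast_zero, zero_smul, sub_zero]

theorem root_letter_mul_of_eq_neg_one {i j : I} (hij : a i j = -1) (x : ℤ) (m : MoveMonoid a) :
    H.root (letter i x * m) j = H.root m i + H.root m j := by
  rw [root_letter_mul, hij]
  module

theorem root_ne_zero (m : MoveMonoid a) (i : I) : H.root m i ≠ 0 :=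
  (LinearEquiv.map_ne_zero_iff _).2 <| Pi.single_ne_zero_iff.2 one_ne_zero

end IsSimplyLacedCartan

end Roots

/-- A factorization `letter head value * tail` of an element of the monoid of decorated words. -/
structure Factorization {I : Type*} (a : I → I → ℤ) where
  head : I
  value : ℤ
  tail : MoveMonoid a

namespace Factorization

variable {I : Type*} {a : I → I → ℤ}

/-- The element that is factorized. -/
def prod (F : Factorization a) : MoveMonoid a := letter F.head F.value * F.tail

end Factorization

/-- At most one 2-move or 3-move at the first letter leads from one factorization to the other. -/
inductive Jump {I : Type*} {a : I → I → ℤ} : Factorization a → Factorization a → Prop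
  | refl (F : Factorization a) : Jump F F
  | two {i j : I} (hij : a i j = 0) (x y : ℤ) (q : MoveMonoid a) :
      Jump ⟨i, x, letter j y * q⟩ ⟨j, y, letter i x * q⟩
  | three {i j : I} (hij : a i j = -1) {x y z x' y' z' : ℤ} (h : IsBraidMove x y z x' y' z')
      (q : MoveMonoid a) :
      Jump ⟨i, x, letter j y * (letter i z * q)⟩ ⟨j, x', letter i y' * (letter j z' * q)⟩

namespace Jump

variable {I : Type*} {a : I → I → ℤ} {F G : Factorization a}

theorem prod_eq (h : Jump F G) : F.prod = G.prod := by
  cases h with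
  | refl => rfl
  | two hij => exact letter_mul_comm hij ..
  | three hij h => exact letter_mul_braid hij h _

theorem mul_right (h : Jump F G) (q : MoveMonoid a) :
    Jump ⟨F.head, F.value, F.tail * q⟩ ⟨G.head, G.value, G.tail * q⟩ := by
  cases h with
  | refl => exact refl _
  | two hij x y r => simpa only [mul_assoc] using two hij x y (r * q)
  | three hij h r => simpa only [mul_assoc] using three hij h (r * q)

theorem symm (H : IsSimplyLacedCartan a) (h : Jump F G) : Jump G F := by
  cases h with
  | refl => exact refl _
  | two hij x y q => exact two (H.symm .. ▸ hij) y x q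
  | three hij h q => exact three (H.symm .. ▸ hij) h.symm q

theorem eq_of_head_eq (H : IsSimplyLacedCartan a) (h : Jump F G) (hFG : F.head = G.head) :
    F = G := by
  cases h with
  | refl => rfl
  | two hij => exact absurd hFG (H.ne_of_eq_zero hij)
  | three hij => exact absurd hFG (H.ne_of_eq_neg_one hij)

end Jump

namespace IsSimplyLacedCartan

variable {I : Type*} [Fintype I] [DecidableEq I] {a : I → I → ℤ} (H : IsSimplyLacedCartan a)

/-- The assertion that a negative root `w⁻¹ α_i` forces a first letter `i`. -/
def SplitsAtNegRoots (m : MoveMonoid a) : Prop :=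
  ∀ i, 0 ≤ H.root m i ∨ ∃ x q, m = letter i x * q

variable {H}

theorem SplitsAtNegRoots.root_nonneg {i : I} {x : ℤ} {m : MoveMonoid a}
    (hm : H.SplitsAtNegRoots m) (hred : (letter i x * m).IsReduced) : 0 ≤ H.root m i := by
  rcases hm i with h | ⟨y, q, rfl⟩
  · exact h
  · exact absurd hred (not_isReduced_letter_mul_letter_mul i x y q)

/- If `m = (j, y) q` and `a_{ij} = -1`, then `w(G)⁻¹ α_j = w(q)⁻¹ α_i`; a further letter `i` of `q`
completes the pattern `i j i` of a 3-move. -/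
theorem SplitsAtNegRoots.nonneg_or_exists_jump {G : Factorization a} (hG : G.prod.IsReduced)
    (hsplit : ∀ q : MoveMonoid a, q.length < G.prod.length → q.IsReduced → H.SplitsAtNegRoots q)
    (j : I) : 0 ≤ H.root G.prod j ∨ ∃ F : Factorization a, F.head = j ∧ Jump G F := by
  obtain ⟨i, x, m⟩ := G
  simp only [Factorization.prod, length_mul, length_letter] at hG hsplit ⊢
  have hm : H.SplitsAtNegRoots m := hsplit m (by omega) hG.of_mul_left
  rcases H.eq_or_eq_zero_or_eq_neg_one i j with rfl | hij | hij
  · exact .inr ⟨_, rfl, .refl _⟩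
  · rw [H.root_letter_mul_of_eq_zero hij]
    refine (hm j).imp_right ?_
    rintro ⟨y, q, rfl⟩
    exact ⟨_, rfl, .two hij x y q⟩
  · rw [H.root_letter_mul_of_eq_neg_one hij]
    rcases hm j with hj | ⟨y, q, rfl⟩
    · exact .inl (add_nonneg (hm.root_nonneg hG) hj)
    · have hji : a j i = -1 := H.symm i j ▸ hij
      rw [H.root_letter_mul_of_eq_neg_one hji, H.root_letter_mul_self, add_neg_cancel_comm]
      refine (hsplit q ?_ hG.of_mul_left.of_mul_left i).imp_right ?_
      · rw [length_mul, length_letter]; omega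
      · rintro ⟨z, r, rfl⟩
        obtain ⟨_, _, _, h⟩ := IsBraidMove.exists_image x y z
        exact ⟨_, rfl, .three hij h r⟩

theorem splitsAtNegRoots {m : MoveMonoid a} (hm : m.IsReduced) : H.SplitsAtNegRoots m := by
  induction hN : m.length using Nat.strong_induction_on generalizing m with
  | _ N ih =>
    intro j
    rcases m.eq_one_or_eq_letter_mul with rfl | ⟨i, x, q, rfl⟩
    · exact .inl (H.root_one j ▸ simpleRoot_nonneg j)
    · let G : Factorization a := ⟨i, x, q⟩
      refine (SplitsAtNegRoots.nonneg_or_exists_jump (G := G) hm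
        (fun r hr hred => ih _ (hN ▸ hr) hred rfl) j).imp_right ?_
      rintro ⟨F, rfl, hF⟩
      exact ⟨F.value, F.tail, hF.prod_eq⟩

theorem root_head_nonpos {F : Factorization a} (hF : F.prod.IsReduced) :
    H.root F.prod F.head ≤ 0 := by
  rw [Factorization.prod, H.root_letter_mul_self, neg_nonpos]
  exact (splitsAtNegRoots hF.of_mul_left).root_nonneg hF

theorem not_root_nonneg_of_nonpos {m : MoveMonoid a} {i : I} (h : H.root m i ≤ 0) :
    ¬ 0 ≤ H.root m i :=
  fun h' => H.root_ne_zero m i (le_antisymm h h')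

theorem exists_eq_letter_mul {m : MoveMonoid a} (hm : m.IsReduced) {i : I}
    (hi : H.root m i ≤ 0) : ∃ x q, m = letter i x * q :=
  (splitsAtNegRoots hm i).resolve_left (not_root_nonneg_of_nonpos hi)

theorem exists_jump {G : Factorization a} (hG : G.prod.IsReduced) {i : I}
    (hi : H.root G.prod i ≤ 0) : ∃ F : Factorization a, F.head = i ∧ Jump G F :=
  (SplitsAtNegRoots.nonneg_or_exists_jump hG (fun _ _ => splitsAtNegRoots) i).resolve_left
    (not_root_nonneg_of_nonpos hi)

variable (H)

/- A finite parabolic subgroup contains no triangle: the sum of the three roots is invariant under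
left multiplication by the three letters. -/
theorem root_add_root_add_root_letter_mul {i j k l : I} (hl : l = i ∨ l = j ∨ l = k)
    (hij : a i j = -1) (hjk : a j k = -1) (hik : a i k = -1) (x : ℤ) (m : MoveMonoid a) :
    H.root (letter l x * m) i + H.root (letter l x * m) j + H.root (letter l x * m) k =
      H.root m i + H.root m j + H.root m k := by
  have hji : a j i = -1 := H.symm i j ▸ hij
  have hkj : a k j = -1 := H.symm j k ▸ hjk
  have hki : a k i = -1 := H.symm i k ▸ hik
  rcases hl with rfl | rfl | rfl <;>
    simp only [H.root_letter_mul, H.diag, hij, hjk, hik, hji, hkj, hki, Int.cast_neg, Int.cast_one,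
      Int.cast_ofNat] <;>
    module

/- The sum of the three roots does not change when one of the three letters is split off, which
can be repeated as long as the sum is not positive. -/
theorem not_root_add_root_add_root_nonpos {m : MoveMonoid a} (hm : m.IsReduced) {i j k : I}
    (hij : a i j = -1) (hjk : a j k = -1) (hik : a i k = -1) :
    ¬ H.root m i + H.root m j + H.root m k ≤ 0 := by
  induction hN : m.length using Nat.strong_induction_on generalizing m with
  | _ N ih =>
    intro hsum
    have hneg : ∃ l, (l = i ∨ l = j ∨ l = k) ∧ ¬ 0 ≤ H.root m l := by
      by_contra! hpos
      have hi := hpos i (.inl rfl)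
      have hj := hpos j (.inr (.inl rfl))
      have hk := hpos k (.inr (.inr rfl))
      have hle : H.root m i ≤ H.root m i + H.root m j + H.root m k := by
        rw [add_assoc]
        exact le_add_of_nonneg_right (add_nonneg hj hk)
      exact not_root_nonneg_of_nonpos (hle.trans hsum) hi
    obtain ⟨l, hl, hml⟩ := hneg
    obtain ⟨x, q, rfl⟩ := (splitsAtNegRoots hm l).resolve_left hml
    rw [H.root_add_root_add_root_letter_mul hl hij hjk hik] at hsum
    rw [length_mul, length_letter] at hN
    exact ih q.length (by omega) hm.of_mul_left rfl hsum

end IsSimplyLacedCartan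

/-- Cancellation of a first letter in reduced elements of length less than `N`; the induction
hypothesis in the proof of `IsReduced.letter_mul_cancel`. -/
def MoveMonoid.CancelsBelow {I : Type*} (a : I → I → ℤ) (N : ℕ) : Prop :=
  ∀ ⦃i : I⦄ ⦃x y : ℤ⦄ ⦃q r : MoveMonoid a⦄, (letter i x * q).length < N →
    (letter i x * q).IsReduced → letter i x * q = letter i y * r → x = y ∧ q = r

theorem MoveMonoid.length_lt_of_letter_mul {I : Type*} {a : I → I → ℤ} {i : I} {x : ℤ}
    {m : MoveMonoid a} {N : ℕ} (h : (letter i x * m).length ≤ N) : m.length < N := by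
  rw [length_mul, length_letter] at h
  omega

theorem Jump.unique {I : Type*} {a : I → I → ℤ} (H : IsSimplyLacedCartan a) {N : ℕ}
    (hN : CancelsBelow a N) {G F F' : Factorization a} (hG : G.prod.IsReduced)
    (hlen : G.prod.length ≤ N) (h : Jump G F) (h' : Jump G F') (hFF' : F.head = F'.head) :
    F = F' := by
  by_cases hGF : G.head = F.head
  · rw [← h.eq_of_head_eq H hGF, ← h'.eq_of_head_eq H (hGF.trans hFF')]
  have hGF' : G.head ≠ F'.head := hFF' ▸ hGF
  generalize hGG' : G = G' at h'
  cases h with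
  | refl => exact absurd rfl hGF
  | @two i j hij x y q =>
    cases h' with
    | refl => exact absurd (congrArg Factorization.head hGG') hGF'
    | @two i' j' _ x' y' q' =>
      simp only [Factorization.mk.injEq] at hGG'
      obtain ⟨rfl, rfl, htail⟩ := hGG'
      obtain rfl : j = j' := hFF'
      obtain ⟨rfl, rfl⟩ := hN (length_lt_of_letter_mul hlen) hG.of_mul_left htail
      rfl
    | @three i' j' hij' =>
      obtain rfl : j = j' := hFF'
      obtain rfl : i = i' := congrArg Factorization.head hGG'
      omega
  | @three i j hij x y z x' y' z' h q =>
    cases h' with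
    | refl => exact absurd (congrArg Factorization.head hGG') hGF'
    | @two i' j' hij' =>
      obtain rfl : j = j' := hFF'
      obtain rfl : i = i' := congrArg Factorization.head hGG'
      omega
    | @three i' j' _ _ _ _ _ _ _ h' q' =>
      simp only [Factorization.mk.injEq] at hGG'
      obtain ⟨rfl, rfl, htail⟩ := hGG'
      obtain rfl : j = j' := hFF'
      have hred := hG.of_mul_left
      obtain ⟨rfl, htail'⟩ := hN (length_lt_of_letter_mul hlen) hred htail
      obtain ⟨rfl, rfl⟩ := hN (length_lt_of_letter_mul (length_lt_of_letter_mul hlen).le)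
        hred.of_mul_left htail'
      obtain ⟨rfl, rfl, rfl⟩ := h.unique h'
      rfl

/- The first and last components of a braid move add up to the middle one, so only three of the
six equalities involve `max` and `min`. -/
theorem IsBraidMove.tetrahedron
    {x₁ x₂ x₃ x₄ x₅ x₆ p₁ p₂ p₃ r₁ r₂ r₃ s₁ s₂ s₃ t₁ t₂ t₃ u₁ u₂ u₃ v₁ v₂ v₃ w₁ w₂ w₃ z₁ z₂ z₃ : ℤ}
    (hp : IsBraidMove x₁ x₂ x₃ p₁ p₂ p₃) (hr : IsBraidMove p₃ x₅ x₆ r₁ r₂ r₃)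
    (hs : IsBraidMove p₂ x₄ r₁ s₁ s₂ s₃) (ht : IsBraidMove x₃ x₄ x₅ t₁ t₂ t₃)
    (hu : IsBraidMove x₂ t₂ x₆ u₁ u₂ u₃) (hv : IsBraidMove x₁ t₁ u₁ v₁ v₂ v₃)
    (hw : IsBraidMove v₃ u₃ t₃ w₁ w₂ w₃) (hz : IsBraidMove v₂ u₂ w₁ z₁ z₂ z₃) :
    p₁ = z₁ ∧ s₁ = v₁ ∧ s₂ = z₂ ∧ s₃ = w₂ ∧ r₂ = z₃ ∧ r₃ = w₃ := by
  have r_fst : r₁ = max x₆ (max (x₅ - x₁) (x₃ + x₅ - x₂)) := by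
    rw [hr.fst, hp.trd]; omega
  have u_fst : u₁ = max x₆ (x₃ + x₅ - x₂) := by rw [hu.fst, ht.snd]
  have h₁ : s₁ = v₁ := by
    rw [hs.fst, hv.fst, ht.fst, hp.snd, r_fst, u_fst]; omega
  have w_fst : w₁ = max x₃ (x₃ + x₅ - x₁ - u₁) := by
    have ht₃ : t₃ = x₄ - t₁ := by linarith only [ht.fst_add_trd]
    have huv : u₃ - v₃ = max (x₃ + x₅ - t₁) (x₃ + x₅ - x₁ - u₁) := by
      have huv₁ : u₃ - v₃ = x₃ + x₅ - u₁ - t₁ + v₁ := by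
        linarith only [hu.fst_add_trd, hv.fst_add_trd, ht.snd]
      rw [huv₁, hv.fst]; omega
    have ht₁ := ht.fst
    rw [hw.fst, ht₃, huv]; omega
  have hp₁ : p₁ = z₁ := by
    rw [hp.fst, hz.fst, hu.snd, hv.snd, w_fst, u_fst]; omega
  have hrw : r₁ + x₃ = u₁ + w₁ := by
    rw [w_fst, r_fst, u_fst]; omega
  refine ⟨hp₁, h₁, ?_, ?_, ?_, ?_⟩
  · linarith only [hrw, hs.snd, hp.snd, hz.snd, hv.snd]
  · linarith only [h₁, hs.fst_add_trd, ht.fst_add_trd, hw.snd, hv.fst_add_trd]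
  · linarith only [hp₁, hp.fst_add_trd, hr.snd, hz.fst_add_trd, hu.snd]
  · linarith only [hrw, hp₁, hr.fst_add_trd, hw.fst_add_trd, hu.fst_add_trd, ht.snd]

/-- Jumps from `G` to first letters `i` and `k` are related by a third jump. -/
def HasTriangle {I : Type*} {a : I → I → ℤ} (G : Factorization a) (i k : I) : Prop :=
  ∃ F K : Factorization a, F.head = i ∧ K.head = k ∧ Jump G F ∧ Jump G K ∧ Jump F K

namespace HasTriangle

variable {I : Type*} {a : I → I → ℤ}

theorem of_commuting {i j k : I} (hji : a j i = 0) (hjk : a j k = 0) (hik : a i k = 0)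
    (x y z : ℤ) (q : MoveMonoid a) :
    HasTriangle ⟨j, x, letter i y * (letter k z * q)⟩ i k := by
  refine ⟨⟨i, y, letter j x * (letter k z * q)⟩, ⟨k, z, letter j x * (letter i y * q)⟩,
    rfl, rfl, .two hji .., ?_, ?_⟩
  · rw [letter_mul_comm hik]
    exact .two hjk ..
  · rw [letter_mul_comm hjk, letter_mul_comm hji]
    exact .two hik ..

variable (H : IsSimplyLacedCartan a)
include H

theorem swap {G : Factorization a} {i k : I} (h : HasTriangle G i k) : HasTriangle G k i :=
  let ⟨F, K, hF, hK, hGF, hGK, hFK⟩ := h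
  ⟨K, F, hK, hF, hGK, hGF, hFK.symm H⟩

theorem rebase {N : ℕ} (hN : CancelsBelow a N) {G F : Factorization a} {k : I}
    (hG : G.prod.IsReduced) (hlen : G.prod.length ≤ N) (hGF : Jump G F)
    (h : HasTriangle F G.head k) : HasTriangle G F.head k := by
  obtain ⟨G', K, hG', hK, hFG', hFK, hG'K⟩ := h
  rw [hGF.prod_eq] at hG hlen
  obtain rfl : G' = G := Jump.unique H hN hG hlen hFG' (hGF.symm H) hG'
  exact ⟨F, K, rfl, hK, hGF, hG'K, hFK⟩

theorem of_isolated {i j k : I} (hji : a j i = 0) (hik : a i k = 0) (hjk : a j k = -1)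
    (x y z t : ℤ) (q : MoveMonoid a) :
    HasTriangle ⟨j, x, letter k y * (letter j z * (letter i t * q))⟩ i k := by
  have hki : a k i = 0 := H.symm i k ▸ hik
  obtain ⟨x', y', z', h⟩ := IsBraidMove.exists_image x y z
  refine ⟨⟨i, t, letter j x * (letter k y * (letter j z * q))⟩,
    ⟨k, x', letter j y' * (letter k z' * (letter i t * q))⟩, rfl, rfl, ?_, .three hjk h _, ?_⟩
  · rw [letter_mul_comm hji, letter_mul_comm hki]
    exact .two hji ..
  · rw [letter_mul_braid hjk h, letter_mul_comm hki, letter_mul_comm hji]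
    exact .two hik ..

/- The three vertices of the triangle are words of the longest element of a parabolic subgroup of
type `A₃`; the tetrahedron identity says that both routes around it agree. -/
theorem of_path {i j k : I} (hji : a j i = -1) (hjk : a j k = -1) (hik : a i k = 0)
    (x₁ x₂ x₃ x₄ x₅ x₆ : ℤ) (q : MoveMonoid a) :
    HasTriangle ⟨j, x₁, letter i x₂ * (letter j x₃ * (letter k x₄ * (letter j x₅ *
      (letter i x₆ * q))))⟩ i k := by
  have hij : a i j = -1 := H.symm j i ▸ hji
  have hkj : a k j = -1 := H.symm j k ▸ hjk
  have hki : a k i = 0 := H.symm i k ▸ hik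
  obtain ⟨p₁, p₂, p₃, hp⟩ := IsBraidMove.exists_image x₁ x₂ x₃
  obtain ⟨r₁, r₂, r₃, hr⟩ := IsBraidMove.exists_image p₃ x₅ x₆
  obtain ⟨s₁, s₂, s₃, hs⟩ := IsBraidMove.exists_image p₂ x₄ r₁
  obtain ⟨t₁, t₂, t₃, ht⟩ := IsBraidMove.exists_image x₃ x₄ x₅
  obtain ⟨u₁, u₂, u₃, hu⟩ := IsBraidMove.exists_image x₂ t₂ x₆
  obtain ⟨v₁, v₂, v₃, hv⟩ := IsBraidMove.exists_image x₁ t₁ u₁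
  obtain ⟨w₁, w₂, w₃, hw⟩ := IsBraidMove.exists_image v₃ u₃ t₃
  obtain ⟨z₁, z₂, z₃, hz⟩ := IsBraidMove.exists_image v₂ u₂ w₁
  refine ⟨⟨i, p₁, letter j p₂ * (letter i p₃ * (letter k x₄ * (letter j x₅ * (letter i x₆ * q))))⟩,
    ⟨k, v₁, letter j v₂ * (letter k v₃ * (letter i u₂ * (letter j u₃ * (letter k t₃ * q))))⟩,
    rfl, rfl, .three hji hp _, ?_, ?_⟩
  · rw [letter_mul_braid hjk ht, letter_mul_comm hik, letter_mul_comm hki t₃,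
      letter_mul_braid hij hu]
    exact .three hjk hv _
  · rw [letter_mul_comm hik, letter_mul_braid hij hr, letter_mul_braid hjk hs,
      letter_mul_comm hki v₃, letter_mul_braid hkj hw, letter_mul_braid hji hz,
      letter_mul_comm hik z₃]
    obtain ⟨rfl, rfl, rfl, rfl, rfl, rfl⟩ := IsBraidMove.tetrahedron hp hr hs ht hu hv hw hz
    exact .two hik ..

end HasTriangle

namespace IsSimplyLacedCartan

variable {I : Type*} [Fintype I] [DecidableEq I] {a : I → I → ℤ} (H : IsSimplyLacedCartan a)
include H

theorem hasTriangle_of_commuting {G : Factorization a} (hG : G.prod.IsReduced) {i k : I}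
    (hji : a G.head i = 0) (hjk : a G.head k = 0) (hik : a i k = 0)
    (hi : H.root G.prod i ≤ 0) (hk : H.root G.prod k ≤ 0) : HasTriangle G i k := by
  obtain ⟨j, x, m⟩ := G
  simp only [Factorization.prod, H.root_letter_mul_of_eq_zero hji,
    H.root_letter_mul_of_eq_zero hjk] at hG hi hk
  obtain ⟨y, m, rfl⟩ := exists_eq_letter_mul hG.of_mul_left hi
  rw [H.root_letter_mul_of_eq_zero hik] at hk
  obtain ⟨z, m, rfl⟩ := exists_eq_letter_mul hG.of_mul_left.of_mul_left hk
  exact .of_commuting hji hjk hik x y z m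

theorem exists_eq_letter_mul_letter_mul {j k : I} (hjk : a j k = -1) {x : ℤ} {m : MoveMonoid a}
    (hm : (letter j x * m).IsReduced) (hk : H.root (letter j x * m) k ≤ 0) :
    ∃ y z q, m = letter k y * (letter j z * q) := by
  obtain ⟨F, rfl, hF⟩ := exists_jump (G := ⟨j, x, m⟩) hm hk
  cases hF with
  | refl => exact absurd rfl (H.ne_of_eq_neg_one hjk)
  | two hjk' => exact absurd (hjk'.symm.trans hjk) (by decide)
  | three => exact ⟨_, _, _, rfl⟩

theorem hasTriangle_of_isolated {G : Factorization a} (hG : G.prod.IsReduced) {i k : I}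
    (hji : a G.head i = 0) (hik : a i k = 0) (hjk : a G.head k = -1)
    (hi : H.root G.prod i ≤ 0) (hk : H.root G.prod k ≤ 0) : HasTriangle G i k := by
  obtain ⟨j, x, m⟩ := G
  obtain ⟨y, z, m, rfl⟩ := H.exists_eq_letter_mul_letter_mul (j := j) hjk hG hk
  have hki : a k i = 0 := H.symm i k ▸ hik
  simp only [Factorization.prod, H.root_letter_mul_of_eq_zero hji,
    H.root_letter_mul_of_eq_zero hki] at hG hi
  obtain ⟨t, m, rfl⟩ := exists_eq_letter_mul hG.of_mul_left.of_mul_left.of_mul_left hi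
  exact .of_isolated H hji hik hjk x y z t m

theorem exists_eq_letter_mul_of_path {i j k : I} (hij : a i j = -1) (hjk : a j k = -1)
    (hik : a i k = 0) {x₁ x₂ x₃ : ℤ} {m : MoveMonoid a}
    (hG : (letter j x₁ * (letter i x₂ * (letter j x₃ * m))).IsReduced)
    (hi : H.root (letter j x₁ * (letter i x₂ * (letter j x₃ * m))) i ≤ 0)
    (hk : H.root (letter j x₁ * (letter i x₂ * (letter j x₃ * m))) k ≤ 0) :
    ∃ x₄ x₅ x₆ q, m = letter k x₄ * (letter j x₅ * (letter i x₆ * q)) := by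
  have hj := root_head_nonpos (H := H) (F := ⟨j, x₁, _⟩) hG
  have hji : a j i = -1 := H.symm i j ▸ hij
  have hkj : a k j = -1 := H.symm j k ▸ hjk
  have hki : a k i = 0 := H.symm i k ▸ hik
  have hm := hG.of_mul_left.of_mul_left.of_mul_left
  simp only [Factorization.prod, H.root_letter_mul_self, H.root_letter_mul_of_eq_neg_one hij,
    H.root_letter_mul_of_eq_neg_one hji, H.root_letter_mul_of_eq_neg_one hjk,
    H.root_letter_mul_of_eq_zero hik] at hi hj hk
  have hm₄ : H.root m k ≤ 0 :=
    le_of_eq_of_le (by abel) (add_nonpos hi (add_nonpos hj hk))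
  obtain ⟨x₄, m, rfl⟩ := exists_eq_letter_mul hm hm₄
  simp only [H.root_letter_mul_self, H.root_letter_mul_of_eq_neg_one hkj,
    H.root_letter_mul_of_eq_zero hki] at hi hj hk
  have hm₅ : H.root m j ≤ 0 := le_of_eq_of_le (by abel) (add_nonpos hj hk)
  obtain ⟨x₅, m, rfl⟩ := exists_eq_letter_mul hm.of_mul_left hm₅
  simp only [H.root_letter_mul_self, H.root_letter_mul_of_eq_neg_one hjk,
    H.root_letter_mul_of_eq_neg_one hji] at hk
  have hm₆ : H.root m i ≤ 0 := le_of_eq_of_le (by abel) hk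
  obtain ⟨x₆, m, rfl⟩ := exists_eq_letter_mul hm.of_mul_left.of_mul_left hm₆
  exact ⟨x₄, x₅, x₆, m, rfl⟩

theorem hasTriangle_of_path {G : Factorization a} (hG : G.prod.IsReduced) {i k : I}
    (hji : a G.head i = -1) (hjk : a G.head k = -1) (hik : a i k = 0)
    (hi : H.root G.prod i ≤ 0) (hk : H.root G.prod k ≤ 0) : HasTriangle G i k := by
  obtain ⟨j, x₁, m⟩ := G
  have hij : a i j = -1 := H.symm j i ▸ hji
  obtain ⟨x₂, x₃, m, rfl⟩ := H.exists_eq_letter_mul_letter_mul (j := j) hji hG hi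
  obtain ⟨x₄, x₅, x₆, m, rfl⟩ := H.exists_eq_letter_mul_of_path hij hjk hik hG hi hk
  exact .of_path H hji hjk hik x₁ x₂ x₃ x₄ x₅ x₆ m

theorem hasTriangle_of_eq_zero {G : Factorization a} (hG : G.prod.IsReduced) {i k : I}
    (hji : G.head ≠ i) (hjk : G.head ≠ k) (hik : a i k = 0)
    (hi : H.root G.prod i ≤ 0) (hk : H.root G.prod k ≤ 0) : HasTriangle G i k := by
  have hki : a k i = 0 := H.symm i k ▸ hik
  rcases H.isSimplyLaced hji with hji | hji <;> rcases H.isSimplyLaced hjk with hjk | hjk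
  · exact H.hasTriangle_of_commuting hG hji hjk hik hi hk
  · exact H.hasTriangle_of_isolated hG hji hik hjk hi hk
  · exact (H.hasTriangle_of_isolated hG hjk hki hji hk hi).swap H
  · exact H.hasTriangle_of_path hG hji hjk hik hi hk

theorem hasTriangle_of_jump {N : ℕ} (hN : CancelsBelow a N) {G F : Factorization a}
    (hG : G.prod.IsReduced) (hlen : G.prod.length ≤ N) (hGF : Jump G F) {k : I}
    (hFG : F.head ≠ G.head) (hFk : F.head ≠ k) (hjk : a G.head k = 0)
    (hk : H.root G.prod k ≤ 0) : HasTriangle G F.head k := by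
  have hj := root_head_nonpos (H := H) hG
  refine .rebase H hN hG hlen hGF ?_
  rw [hGF.prod_eq] at hG hj hk
  exact H.hasTriangle_of_eq_zero hG hFG hFk hjk hj hk

theorem hasTriangle {N : ℕ} (hN : CancelsBelow a N) {G : Factorization a}
    (hG : G.prod.IsReduced) (hlen : G.prod.length ≤ N) {i k : I} (hji : G.head ≠ i)
    (hjk : G.head ≠ k) (hik : i ≠ k) (hi : H.root G.prod i ≤ 0) (hk : H.root G.prod k ≤ 0) :
    HasTriangle G i k := by
  rcases H.isSimplyLaced hik with hik₀ | hik₁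
  · exact H.hasTriangle_of_eq_zero hG hji hjk hik₀ hi hk
  obtain ⟨F, rfl, hGF⟩ := exists_jump hG hi
  obtain ⟨K, rfl, hGK⟩ := exists_jump hG hk
  rcases H.isSimplyLaced hji with hji₀ | hji₁
  · exact (H.hasTriangle_of_jump hN hG hlen hGK hjk.symm hik.symm hji₀ hi).swap H
  rcases H.isSimplyLaced hjk with hjk₀ | hjk₁
  · exact H.hasTriangle_of_jump hN hG hlen hGF hji.symm hik hjk₀ hk
  · exact absurd (add_nonpos (add_nonpos (root_head_nonpos hG) hi) hk)
      (H.not_root_add_root_add_root_nonpos hG hji₁ hik₁ hjk₁)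

end IsSimplyLacedCartan

theorem IsSimplyLacedCartan.jump_trans {I : Type*} [Finite I] {a : I → I → ℤ}
    (H : IsSimplyLacedCartan a) {N : ℕ} (hN : CancelsBelow a N) {F G K : Factorization a}
    (hG : G.prod.IsReduced) (hlen : G.prod.length ≤ N) (hFG : Jump F G) (hGK : Jump G K) :
    Jump F K := by
  have := Fintype.ofFinite I
  classical
  have hGF := hFG.symm H
  by_cases hji : G.head = F.head
  · rwa [← hGF.eq_of_head_eq H hji]
  by_cases hjk : G.head = K.head
  · rwa [← hGK.eq_of_head_eq H hjk]
  by_cases hik : F.head = K.head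
  · rw [hGF.unique H hN hG hlen hGK hik]
    exact .refl K
  have hi := root_head_nonpos (H := H) (hGF.prod_eq ▸ hG)
  have hk := root_head_nonpos (H := H) (hGK.prod_eq ▸ hG)
  rw [← hGF.prod_eq] at hi
  rw [← hGK.prod_eq] at hk
  obtain ⟨F', K', hF', hK', hGF', hGK', hFK'⟩ := H.hasTriangle hN hG hlen hji hjk hik hi hk
  rwa [hGF.unique H hN hG hlen hGF' hF'.symm, hGK.unique H hN hG hlen hGK' hK'.symm]

namespace MoveMonoid

variable {I : Type*} {a : I → I → ℤ}

/-- Two words that are both empty, or whose factorizations by first letters differ by a jump. -/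
inductive HeadJump (a : I → I → ℤ) : FreeMonoid (I × ℤ) → FreeMonoid (I × ℤ) → Prop
  | one : HeadJump a 1 1
  | of_mul {i j : I} {x y : ℤ} {u v : FreeMonoid (I × ℤ)}
      (h : Jump ⟨i, x, mk a u⟩ ⟨j, y, mk a v⟩) : HeadJump a (.of (i, x) * u) (.of (j, y) * v)

namespace HeadJump

variable {u v u' v' w : FreeMonoid (I × ℤ)}

theorem refl (u : FreeMonoid (I × ℤ)) : HeadJump a u u := by
  cases u with
  | one => exact one
  | of_mul p u => exact of_mul (.refl _)

theorem of_moveRel (h : MoveRel a u v) : HeadJump a u v := by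
  cases h with
  | two hij x y =>
    have hjump := Jump.two hij x y (mk a 1)
    exact of_mul hjump
  | three hij h =>
    have hjump := Jump.three hij h (mk a 1)
    exact of_mul hjump

theorem symm (H : IsSimplyLacedCartan a) (h : HeadJump a u v) : HeadJump a v u := by
  cases h with
  | one => exact one
  | of_mul h => exact of_mul (h.symm H)

theorem mul (h : HeadJump a u v) (h' : HeadJump a u' v') (heq : mk a u' = mk a v') :
    HeadJump a (u * u') (v * v') := by
  cases h with
  | one => exact h'
  | of_mul h =>
    have hjump := h.mul_right (mk a u')
    simp only [mul_assoc]
    refine of_mul ?_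
    rw [map_mul, map_mul, ← heq]
    exact hjump

theorem jump {i j : I} {x y : ℤ} (h : HeadJump a (.of (i, x) * u) (.of (j, y) * v)) :
    Jump (a := a) ⟨i, x, mk a u⟩ ⟨j, y, mk a v⟩ := by
  generalize hu : FreeMonoid.of (i, x) * u = u₀ at h
  generalize hv : FreeMonoid.of (j, y) * v = v₀ at h
  cases h with
  | one => exact absurd hu (List.cons_ne_nil _ _)
  | of_mul h =>
    cases hu
    cases hv
    exact h

theorem trans [Finite I] (H : IsSimplyLacedCartan a) {N : ℕ}
    (hN : CancelsBelow a N) (hred : (mk a v).IsReduced) (hlen : (mk a v).length ≤ N)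
    (h : HeadJump a u v) (h' : HeadJump a v w) : HeadJump a u w := by
  generalize hv : v = v₀ at h'
  cases h with
  | one => exact hv ▸ h'
  | @of_mul _ j _ y _ v h =>
    cases h' with
    | one => exact absurd hv (List.cons_ne_nil _ _)
    | of_mul h' =>
      cases hv
      exact of_mul (H.jump_trans hN (G := ⟨j, y, mk a v⟩) hred hlen h h')

end HeadJump

variable [Finite I]

theorem headJump_of_conGenRel (H : IsSimplyLacedCartan a) {N : ℕ} (hN : CancelsBelow a N)
    {u v : FreeMonoid (I × ℤ)} (h : ConGen.Rel (MoveRel a) u v) (hred : (mk a u).IsReduced)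
    (hlen : (mk a u).length ≤ N) : HeadJump a u v := by
  have mk_eq {u v : FreeMonoid (I × ℤ)} (h : ConGen.Rel (MoveRel a) u v) : mk a u = mk a v :=
    PresentedMonoid.mk_eq_mk_iff.2 h
  induction h with
  | of u v h => exact .of_moveRel h
  | refl u => exact .refl u
  | symm h ih =>
    rw [← mk_eq h] at hred hlen
    exact (ih hred hlen).symm H
  | trans h _ ih ih' =>
    have hmk := mk_eq h
    exact .trans H hN (hmk ▸ hred) (hmk ▸ hlen) (ih hred hlen) (ih' (hmk ▸ hred) (hmk ▸ hlen))
  | mul _ h' ih ih' =>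
    rw [map_mul] at hred hlen
    rw [length_mul] at hlen
    exact (ih hred.of_mul_right (by omega)).mul (ih' hred.of_mul_left (by omega)) (mk_eq h')

theorem cancelsBelow (H : IsSimplyLacedCartan a) (N : ℕ) : CancelsBelow a N := by
  induction N with
  | zero => exact fun _ _ _ _ _ h => absurd h (Nat.not_lt_zero _)
  | succ N hN =>
    intro i x y q r hlen hred heq
    obtain ⟨u, rfl⟩ := mk_surjective q
    obtain ⟨v, rfl⟩ := mk_surjective r
    have hrel : ConGen.Rel (MoveRel a) (.of (i, x) * u) (.of (i, y) * v) :=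
      PresentedMonoid.mk_eq_mk_iff.1 heq
    have hjump := (headJump_of_conGenRel H hN hrel hred (Nat.lt_succ_iff.1 hlen)).jump
    have hfac := hjump.eq_of_head_eq H rfl
    exact ⟨congrArg Factorization.value hfac, congrArg Factorization.tail hfac⟩

theorem IsReduced.letter_mul_cancel (H : IsSimplyLacedCartan a) {i : I} {x y : ℤ}
    {q r : MoveMonoid a} (hred : (letter i x * q).IsReduced)
    (h : letter i x * q = letter i y * r) : x = y ∧ q = r :=
  cancelsBelow H _ (Nat.lt_succ_self _) hred h

end MoveMonoid

theorem take_two_drop_ofFn {α : Type*} {k p : ℕ} (f : Fin k → α) (h : p + 1 < k) :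
    ((List.ofFn f).drop p).take 2 = [f ⟨p, by omega⟩, f ⟨p + 1, h⟩] := by
  rw [List.drop_eq_getElem_cons, List.drop_eq_getElem_cons, List.take_succ_cons,
    List.take_succ_cons, List.take_zero, List.getElem_ofFn, List.getElem_ofFn]
  all_goals rw [List.length_ofFn]; omega

theorem take_three_drop_ofFn {α : Type*} {k p : ℕ} (f : Fin k → α) (h : p + 2 < k) :
    ((List.ofFn f).drop p).take 3 =
      [f ⟨p, by omega⟩, f ⟨p + 1, by omega⟩, f ⟨p + 2, h⟩] := by
  rw [List.drop_eq_getElem_cons, List.take_succ_cons, take_two_drop_ofFn f h, List.getElem_ofFn]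
  rw [List.length_ofFn]; omega

namespace MoveMonoid

section Tuples

variable {I : Type*} {a : I → I → ℤ}

theorem length_mk (u : FreeMonoid (I × ℤ)) : (mk a u).length = u.length := by
  induction u with
  | one => rw [map_one, length_one, FreeMonoid.length_one]
  | of x => rfl
  | mul u v hu hv => rw [map_mul, length_mul, hu, hv, FreeMonoid.length_mul]

theorem mk_ofList_congr {l l' : List (I × ℤ)} (p d : ℕ)
    (hout : ∀ q, q < p ∨ p + d ≤ q → l[q]? = l'[q]?)
    (hmid : mk a (.ofList ((l.drop p).take d)) = mk a (.ofList ((l'.drop p).take d))) :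
    mk a (.ofList l) = mk a (.ofList l') := by
  have hsplit (l : List (I × ℤ)) : mk a (.ofList l) = mk a (.ofList (l.take p)) *
      (mk a (.ofList ((l.drop p).take d)) * mk a (.ofList (l.drop (p + d)))) := by
    rw [← map_mul, ← map_mul, ← FreeMonoid.ofList_append, ← FreeMonoid.ofList_append,
      ← List.drop_drop, List.take_append_drop, List.take_append_drop]
  have htake : l.take p = l'.take p := List.ext_getElem? fun q => by
    simp only [List.getElem?_take]
    split_ifs with hq
    · exact hout q (.inl hq)
    · rfl
  have hdrop : l.drop (p + d) = l'.drop (p + d) := List.ext_getElem? fun q => by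
    simpa only [List.getElem?_drop] using hout _ (.inr (Nat.le_add_right ..))
  rw [hsplit l, hsplit l', htake, hmid, hdrop]

/-- The word `w` decorated by the tuple `x`. -/
def decorated {k : ℕ} (a : I → I → ℤ) (w : Fin k → I) (x : Fin k → ℤ) : MoveMonoid a :=
  mk a (.ofList (List.ofFn fun q => (w q, x q)))

theorem decorated_succ {k : ℕ} (w : Fin (k + 1) → I) (x : Fin (k + 1) → ℤ) :
    decorated a w x = letter (w 0) (x 0) * decorated a (w ∘ Fin.succ) (x ∘ Fin.succ) := by
  rw [decorated, List.ofFn_succ]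
  rfl

theorem length_decorated {k : ℕ} (w : Fin k → I) (x : Fin k → ℤ) :
    (decorated a w x).length = k := by
  rw [decorated, length_mk]
  exact List.length_ofFn

theorem decorated_congr {k : ℕ} {w w' : Fin k → I} {x x' : Fin k → ℤ} (p d : ℕ)
    (hout : ∀ q : Fin k, (q : ℕ) < p ∨ p + d ≤ q → w q = w' q ∧ x q = x' q)
    (hmid : mk a (.ofList (((List.ofFn fun q => (w q, x q)).drop p).take d)) =
      mk a (.ofList (((List.ofFn fun q => (w' q, x' q)).drop p).take d))) :
    decorated a w x = decorated a w' x' := by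
  refine mk_ofList_congr p d (fun q hq => ?_) hmid
  simp only [List.getElem?_ofFn]
  split_ifs with h
  · rw [(hout ⟨q, h⟩ hq).1, (hout ⟨q, h⟩ hq).2]
  · rfl

end Tuples

variable {n k : ℕ} {a : Fin n → Fin n → ℤ} {w : Fin k → Fin n}

theorem decorated_moveWord_two {p : ℕ} (h : ValidMove a w (.two p)) (x : Fin k → ℤ) :
    decorated a w x = decorated a (moveWord w (.two p)) (moveZ x (.two p)) := by
  obtain ⟨hp, hij, -⟩ := h
  refine decorated_congr p 2 (fun q hq => ?_) ?_
  · have hq₀ : (q : ℕ) ≠ p := by omega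
    have hq₁ : (q : ℕ) ≠ p + 1 := by omega
    simp only [moveWord, moveZ, hq₀, hq₁, false_and, dite_false, and_self]
  · rw [take_two_drop_ofFn _ hp, take_two_drop_ofFn _ hp]
    have hp' : p < k := by omega
    simp only [moveWord, moveZ, hp, hp', Nat.add_eq_left, one_ne_zero, false_and, true_and,
      dite_true, dite_false]
    exact letter_comm hij _ _

theorem decorated_moveWord_three {p : ℕ} (h : ValidMove a w (.three p)) (x : Fin k → ℤ) :
    decorated a w x = decorated a (moveWord w (.three p)) (moveZ x (.three p)) := by
  obtain ⟨hp, hii, hij, -⟩ := h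
  refine decorated_congr p 3 (fun q hq => ?_) ?_
  · have hq₀ : (q : ℕ) ≠ p := by omega
    have hq₁ : (q : ℕ) ≠ p + 1 := by omega
    have hq₂ : (q : ℕ) ≠ p + 2 := by omega
    simp only [moveWord, moveZ, hp, hq₀, hq₁, hq₂, false_and, dite_true, dite_false, ite_false,
      and_self]
  · rw [take_three_drop_ofFn _ hp, take_three_drop_ofFn _ hp]
    have hp₀ : p < k := by omega
    have hp₁ : p + 1 < k := by omega
    simp only [moveWord, moveZ, hp, hp₀, hp₁, ← hii, Nat.add_eq_left, Nat.add_left_cancel_iff,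
      one_ne_zero, OfNat.ofNat_ne_zero, OfNat.ofNat_ne_one, and_true, and_self, dite_true,
      dite_false, ite_true, ite_false]
    exact letter_braid hij ⟨rfl, rfl, rfl⟩

theorem decorated_moveWord {m : BMove} (h : ValidMove a w m) (x : Fin k → ℤ) :
    decorated a w x = decorated a (moveWord w m) (moveZ x m) :=
  match m with
  | .two _ => decorated_moveWord_two h x
  | .three _ => decorated_moveWord_three h x

theorem decorated_wordAfter {ms : List BMove} (h : ValidSeq a w ms) (x : Fin k → ℤ) :
    decorated a w x = decorated a (wordAfter w ms) (zAfter x ms) := by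
  induction h generalizing x with
  | nil => rfl
  | cons w m ms hm _ ih => exact (decorated_moveWord hm x).trans (ih _)

end MoveMonoid

namespace IsSimplyLacedCartan

variable {n : ℕ} {a : Fin n → Fin n → ℤ} (H : IsSimplyLacedCartan a)

theorem coe_simpleReflection (i : Fin n) : ⇑(H.simpleReflection i) = sRefl a i := by
  funext v
  simp only [simpleReflection_apply, sRefl, simpleCoroot, simpleRoot,
    Fintype.linearCombination_apply, smul_eq_mul, mul_comm]

theorem coe_weyl_mk (u : FreeMonoid (Fin n × ℤ)) :
    ⇑(H.weyl (MoveMonoid.mk a u)) = wProd a (u.toList.map Prod.fst) := by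
  induction u using FreeMonoid.recOn with
  | one => rw [map_one, map_one]; rfl
  | of_mul p u ih =>
    calc
      ⇑(H.weyl (MoveMonoid.mk a (.of p * u)))
        = H.simpleReflection p.1 ∘ H.weyl (MoveMonoid.mk a u) := by rw [map_mul, map_mul]; rfl
      _ = wProd a ((FreeMonoid.of p * u).toList.map Prod.fst) := by
        rw [ih, H.coe_simpleReflection]; rfl

theorem coe_weyl_decorated {k : ℕ} (w : Fin k → Fin n) (x : Fin k → ℤ) :
    ⇑(H.weyl (decorated a w x)) = wProd a (List.ofFn w) := by
  rw [decorated, coe_weyl_mk, FreeMonoid.toList_ofList, List.map_ofFn]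
  rfl

end IsSimplyLacedCartan

theorem MoveMonoid.isReduced_decorated {n k : ℕ} {a : Fin n → Fin n → ℤ}
    (H : IsSimplyLacedCartan a) {w : Fin k → Fin n} (hw : IsReducedList a (List.ofFn w))
    (x : Fin k → ℤ) : (decorated a w x).IsReduced := by
  intro i y z p q hwx
  obtain ⟨u, hu⟩ := mk_surjective (p * q)
  have hweyl : H.weyl (decorated a w x) = H.weyl (mk a u) := by
    rw [hwx, hu, map_mul, map_mul, H.weyl_letter_mul_letter, mul_one, map_mul]
  have hlen := congrArg length hwx
  have hlen' := congrArg length hu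
  have hle := hw (u.toList.map Prod.fst) <| by
    rw [← H.coe_weyl_mk, ← hweyl, H.coe_weyl_decorated]
  rw [List.length_ofFn, List.length_map] at hle
  rw [length_mk, length_mul] at hlen'
  simp only [length_decorated, length_mul, length_letter] at hlen
  change k ≤ u.length at hle
  omega

theorem SimpleCartanMatrix.isSimplyLacedCartan {n : ℕ} (C : SimpleCartanMatrix n)
    (hsl : ∀ i j, i ≠ j → C.a i j = 0 ∨ C.a i j = -1) : IsSimplyLacedCartan C.a where
  diag := C.diag
  symm i j := by
    obtain rfl | hij := eq_or_ne i j
    · rfl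
    rcases hsl i j hij with h | h <;> rcases hsl j i hij.symm with h' | h'
    · rw [h, h']
    · rw [h, C.zero_symm i j h]
    · rw [h', C.zero_symm j i h']
    · rw [h, h']
  isSimplyLaced _ _ := hsl _ _

theorem moves_first_coordinate_agree_general {n k : ℕ} {a : Fin n → Fin n → ℤ}
    (H : IsSimplyLacedCartan a) (ι : Fin k → Fin n) (hred : IsReducedList a (List.ofFn ι))
    (hk : 0 < k) (ms₁ ms₂ : List BMove) (hval₁ : ValidSeq a ι ms₁) (hval₂ : ValidSeq a ι ms₂)
    (hfirst : wordAfter ι ms₁ ⟨0, hk⟩ = wordAfter ι ms₂ ⟨0, hk⟩) (x : Fin k → ℤ) :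
    zAfter x ms₁ ⟨0, hk⟩ = zAfter x ms₂ ⟨0, hk⟩ := by
  obtain ⟨k, rfl⟩ := Nat.exists_eq_succ_of_ne_zero hk.ne'
  have heq : decorated a (wordAfter ι ms₁) (zAfter x ms₁) =
      decorated a (wordAfter ι ms₂) (zAfter x ms₂) := by
    rw [← decorated_wordAfter hval₁, ← decorated_wordAfter hval₂]
  have hred₁ : (decorated a (wordAfter ι ms₁) (zAfter x ms₁)).IsReduced := by
    rw [← decorated_wordAfter hval₁]
    exact isReduced_decorated H hred x
  rw [decorated_succ] at hred₁
  rw [decorated_succ, decorated_succ, ← show wordAfter ι ms₁ 0 = wordAfter ι ms₂ 0 from hfirst]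
    at heq
  exact (hred₁.letter_mul_cancel H heq).1

/-- If two sequences of 2-moves and 3-moves transform the
reduced word `ι` into words with the same first letter, then the corresponding
compositions of associated piecewise-linear maps agree in the first
coordinate. -/
theorem moves_first_coordinate_agree {n k : ℕ} (C : SimpleCartanMatrix n)
    (hsl : ∀ i j, i ≠ j → C.a i j = 0 ∨ C.a i j = -1)
    (ι : Fin k → Fin n) (hred : IsReducedList C.a (List.ofFn ι)) (hk : 0 < k)
    (ms₁ ms₂ : List BMove)
    (hval₁ : ValidSeq C.a ι ms₁) (hval₂ : ValidSeq C.a ι ms₂)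
    (hfirst : wordAfter ι ms₁ ⟨0, hk⟩ = wordAfter ι ms₂ ⟨0, hk⟩) :
    ∀ x : Fin k → ℤ, zAfter x ms₁ ⟨0, hk⟩ = zAfter x ms₂ ⟨0, hk⟩ :=
  moves_first_coordinate_agree_general (C.isSimplyLacedCartan hsl) ι hred hk ms₁ ms₂ hval₁ hval₂
    hfirst
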